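/- Let R be a nontrivial commutative ring that is locally residually-ℤ and let G be a subgroup of UT₃(R) containing a₁ and a₂. If the representation G ≤ UT₃(R) satisfies the Lame Property, then G satisfies τ: for all x₁, x₂ ∈ G with [x₂,x₁]=1, [a₂,x₂]=1 and [x₁,a₁]=1, either [x₂,a₁]=1 or [a₂,x₁]=1. -/

import Mathlib

set_option linter.unnecessarySeqFocus false

open Matrix

/-- A 3×3 matrix is *upper unitriangular* if all diagonal entries are `1`
and all entries below the diagonal are `0`. -/
def IsUnitriangular {R : Type*} [CommRing R] (M : Matrix (Fin 3) (Fin 3) R) : Prop :=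
  (∀ i, M i i = 1) ∧ ∀ i j : Fin 3, j < i → M i j = 0

/-- The upper unitriangular matrix with above-diagonal entries `a b c`, as a unit. -/
def ut {R : Type*} [CommRing R] (a b c : R) : (Matrix (Fin 3) (Fin 3) R)ˣ where
  val := !![1, a, b; 0, 1, c; 0, 0, 1]
  inv := !![1, -a, a * c - b; 0, 1, -c; 0, 0, 1]
  val_inv := by
    ext i j
    fin_cases i <;> fin_cases j <;>
      simp [Matrix.mul_apply, Fin.sum_univ_three, Matrix.one_apply, Matrix.vecHead, Matrix.vecTail] <;> ring
  inv_val := by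
    ext i j
    fin_cases i <;> fin_cases j <;>
      simp [Matrix.mul_apply, Fin.sum_univ_three, Matrix.one_apply, Matrix.vecHead, Matrix.vecTail] <;> ring

lemma ut_eq_iff {R : Type*} [CommRing R] (g : (Matrix (Fin 3) (Fin 3) R)ˣ) :
    IsUnitriangular (g : Matrix (Fin 3) (Fin 3) R) ↔
      ∃ a b c : R, g = ut a b c := by
  constructor
  · rintro ⟨h1, h2⟩
    refine ⟨(g : Matrix (Fin 3) (Fin 3) R) 0 1, (g : Matrix (Fin 3) (Fin 3) R) 0 2,
      (g : Matrix (Fin 3) (Fin 3) R) 1 2, Units.ext ?_⟩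
    ext i j
    fin_cases i <;> fin_cases j <;>
      simp [ut, Matrix.vecHead, Matrix.vecTail, h1, h2 1 0 (by decide), h2 2 0 (by decide), h2 2 1 (by decide)]
  · rintro ⟨a, b, c, rfl⟩
    constructor
    · intro i; fin_cases i <;> simp [ut]
    · intro i j hij
      fin_cases i <;> fin_cases j <;> simp_all [ut, Matrix.vecHead, Matrix.vecTail]

/-- `UT₃(R)`: the group of 3×3 upper unitriangular matrices over `R`, realized as the
subgroup of units of the matrix ring whose underlying matrices are upper unitriangular. -/
def UT3 (R : Type*) [CommRing R] : Subgroup (Matrix (Fin 3) (Fin 3) R)ˣ where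
  carrier := {g | IsUnitriangular (g : Matrix (Fin 3) (Fin 3) R)}
  one_mem' := by
    constructor
    · intro i; simp
    · intro i j hij; simp [Matrix.one_apply, hij.ne']
  mul_mem' := by
    intro a b ha hb
    rw [Set.mem_setOf_eq, ut_eq_iff] at *
    obtain ⟨a1, a2, a3, rfl⟩ := ha
    obtain ⟨b1, b2, b3, rfl⟩ := hb
    refine ⟨a1 + b1, a2 + b2 + a1 * b3, a3 + b3, Units.ext ?_⟩
    ext i j
    fin_cases i <;> fin_cases j <;>
      simp [ut, Matrix.mul_apply, Fin.sum_univ_three, Matrix.vecHead, Matrix.vecTail] <;> ring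
  inv_mem' := by
    intro a ha
    rw [Set.mem_setOf_eq, ut_eq_iff] at *
    obtain ⟨a1, a2, a3, rfl⟩ := ha
    refine ⟨-a1, a1 * a3 - a2, -a3, Units.ext ?_⟩
    rfl

/-- The generator `a₁` of the Heisenberg group: `(2,3)`-entry `1`, other
above-diagonal entries `0`. -/
def genA1 (R : Type*) [CommRing R] : (Matrix (Fin 3) (Fin 3) R)ˣ := ut 0 0 1

/-- The generator `a₂` of the Heisenberg group: `(1,2)`-entry `1`, other
above-diagonal entries `0`. -/
def genA2 (R : Type*) [CommRing R] : (Matrix (Fin 3) (Fin 3) R)ˣ := ut 1 0 0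

lemma genA1_mem (R : Type*) [CommRing R] : genA1 R ∈ UT3 R :=
  (ut_eq_iff _).mpr ⟨0, 0, 1, rfl⟩

lemma genA2_mem (R : Type*) [CommRing R] : genA2 R ∈ UT3 R :=
  (ut_eq_iff _).mpr ⟨1, 0, 0, rfl⟩

/-- The sentence `τ`: for all `x₁ x₂` in `G` with `[x₂,x₁] = 1`, `[a₂,x₂] = 1` and
`[x₁,a₁] = 1`, either `[x₂,a₁] = 1` or `[a₂,x₁] = 1` (commutators `[y,x] = y⁻¹x⁻¹yx`). -/
def SatisfiesTau (R : Type*) [CommRing R] (G : Subgroup (Matrix (Fin 3) (Fin 3) R)ˣ) : Prop :=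
  ∀ x₁ ∈ G, ∀ x₂ ∈ G,
    x₂⁻¹ * x₁⁻¹ * x₂ * x₁ = 1 →
    (genA2 R)⁻¹ * x₂⁻¹ * genA2 R * x₂ = 1 →
    x₁⁻¹ * (genA1 R)⁻¹ * x₁ * genA1 R = 1 →
    (x₂⁻¹ * (genA1 R)⁻¹ * x₂ * genA1 R = 1 ∨ (genA2 R)⁻¹ * x₁⁻¹ * genA2 R * x₁ = 1)

/-- A commutative ring `R` is *locally residually-ℤ* if for every finitely generated
subring `R₀` of `R` and every nonzero `r ∈ R₀` there is a ring homomorphism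
`φ : R₀ →+* ℤ` with `φ r ≠ 0`. -/
def LocResZ (R : Type*) [CommRing R] : Prop :=
  ∀ R₀ : Subring R, (∃ s : Finset R, R₀ = Subring.closure ↑s) →
    ∀ r : R₀, r ≠ 0 → ∃ φ : R₀ →+* ℤ, φ r ≠ 0

/-- The representation `G ≤ UT₃(R)` satisfies the *Lame Property* if for every
`g ∈ C_G(a₁) ∪ C_G(a₂)`, either `g₁₂² + g₂₃² = 0` or `g₁₂² + g₂₃²` is not a zero
divisor in `R`. -/
def LameProperty (R : Type*) [CommRing R] (G : Subgroup (Matrix (Fin 3) (Fin 3) R)ˣ) : Prop :=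
  ∀ g ∈ G, (g * genA1 R = genA1 R * g ∨ g * genA2 R = genA2 R * g) →
    ((g : Matrix (Fin 3) (Fin 3) R) 0 1 ^ 2 + (g : Matrix (Fin 3) (Fin 3) R) 1 2 ^ 2 = 0 ∨
      (g : Matrix (Fin 3) (Fin 3) R) 0 1 ^ 2 + (g : Matrix (Fin 3) (Fin 3) R) 1 2 ^ 2 ∈
        nonZeroDivisors R)

lemma grp_comm_of {H : Type*} [Group H] {y x : H} (h : y⁻¹ * x⁻¹ * y * x = 1) : y * x = x * y := by
  have h' : (x * y)⁻¹ * (y * x) = 1 := by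
    rw [← h]; group
  exact (inv_mul_eq_one.mp h').symm

lemma grp_of_comm {H : Type*} [Group H] {y x : H} (h : y * x = x * y) : y⁻¹ * x⁻¹ * y * x = 1 := by
  have h' : (x * y)⁻¹ * (y * x) = 1 := inv_mul_eq_one.mpr h.symm
  rw [← h']; group

lemma ut_comm_iff {R : Type*} [CommRing R] (a b c a' b' c' : R) :
    ut a b c * ut a' b' c' = ut a' b' c' * ut a b c ↔ a * c' = a' * c := by
  constructor
  · intro h
    have := congrArg (fun u : (Matrix (Fin 3) (Fin 3) R)ˣ =>
      (u : Matrix (Fin 3) (Fin 3) R) 0 2) h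
    simp [ut, Matrix.mul_apply, Fin.sum_univ_three] at this
    linear_combination this
  · intro h
    apply Units.ext
    ext i j
    fin_cases i <;> fin_cases j <;>
      simp [ut, Matrix.mul_apply, Fin.sum_univ_three] <;>
      first | ring1 | linear_combination h

lemma eq_zero_of_sq {R : Type*} [CommRing R] (hR : LocResZ R) {c : R} (h : c ^ 2 = 0) :
    c = 0 := by
  by_contra hne
  have hmem : c ∈ Subring.closure (({c} : Finset R) : Set R) :=
    Subring.subset_closure (by simp)
  obtain ⟨φ, hφ⟩ := hR _ ⟨{c}, rfl⟩ ⟨c, hmem⟩ (fun h0 => hne (congrArg Subtype.val h0))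
  apply hφ
  have hs : (⟨c, hmem⟩ : Subring.closure (({c} : Finset R) : Set R)) ^ 2 = 0 :=
    Subtype.ext h
  have := congrArg φ hs
  rw [map_pow, map_zero] at this
  exact pow_eq_zero_iff (two_ne_zero) |>.mp this

/-- If a representation `G ≤ UT₃(R)` (with `R` nontrivial, locally
residually-ℤ, and `a₁, a₂ ∈ G`) satisfies the Lame Property, then `G` satisfies `τ`. -/
theorem satisfiesTau_of_lame (R : Type*) [CommRing R] [Nontrivial R] (hR : LocResZ R)
    (G : Subgroup (Matrix (Fin 3) (Fin 3) R)ˣ) (hG : G ≤ UT3 R)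
    (h1 : genA1 R ∈ G) (h2 : genA2 R ∈ G)
    (hLame : LameProperty R G) :
    SatisfiesTau R G := by
  intro x₁ hx₁ x₂ hx₂ hc h22 h11
  have e1 := grp_comm_of hc
  have e2 := grp_comm_of h22
  have e3 := grp_comm_of h11
  have hL := hLame x₁ hx₁ (Or.inl e3)
  obtain ⟨a, b, c, rfl⟩ := (ut_eq_iff _).mp (hG hx₁)
  obtain ⟨a', b', c', rfl⟩ := (ut_eq_iff _).mp (hG hx₂)
  have ha : a = 0 := by
    have := (ut_comm_iff _ _ _ _ _ _).mp e3
    simpa using this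
  have hc' : c' = 0 := by
    have := (ut_comm_iff _ _ _ _ _ _).mp e2
    simpa using this
  subst ha hc'
  have hac : a' * c = 0 := by
    have := (ut_comm_iff _ _ _ _ _ _).mp e1
    simpa using this
  have hv1 : ((ut 0 b c : (Matrix (Fin 3) (Fin 3) R)ˣ) : Matrix (Fin 3) (Fin 3) R) 0 1 = 0 := by
    simp [ut]
  have hv2 : ((ut 0 b c : (Matrix (Fin 3) (Fin 3) R)ˣ) : Matrix (Fin 3) (Fin 3) R) 1 2 = c := by
    simp [ut]
  rw [hv1, hv2] at hL
  have hz : (0 : R) ^ 2 + c ^ 2 = c ^ 2 := by ring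
  rw [hz] at hL
  rcases hL with h | h
  · right
    have hc0 : c = 0 := eq_zero_of_sq hR h
    exact grp_of_comm ((ut_comm_iff _ _ _ _ _ _).mpr (by simp [hc0]))
  · left
    have ha0 : a' = 0 := by
      have hm : a' * c ^ 2 = 0 := by
        rw [pow_two, ← mul_assoc, hac, zero_mul]
      exact (mem_nonZeroDivisors_iff.mp h).2 a' hm
    exact grp_of_comm ((ut_comm_iff _ _ _ _ _ _).mpr (by simp [ha0]))
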